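/- arXiv:2112.05064 — 3 statements merged into one kernel-verified Lean document; each statement's English description precedes it below -/
import Mathlib

section
/- For all integers m, i, r with 0 ≤ i ≤ m and r ≥ 0, Σ_{k=0}^{m} ((−1)^k/k!) · C(r+1, m−k) · ⟦k+r+1, i+r+1⟧_{r+1} = ((−1)^m/m!) · ⟦m, i⟧, as an identity of rational numbers, where C(a,b) is a binomial coefficient. -/
/-- The `r`-Stirling numbers of the first kind `⟦n,k⟧_r`: `⟦r,r⟧_r = 1`,
`⟦n,k⟧_r = 0` if `n < r` or `k < r`, and
`⟦n,k⟧_r = (n-1)·⟦n-1,k⟧_r + ⟦n-1,k-1⟧_r` for `n > r`. -/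
def rStirling1 (r : ℕ) : ℕ → ℕ → ℕ
  | 0, k => if r = 0 ∧ k = 0 then 1 else 0
  | (n+1), k =>
    if n + 1 < r ∨ k < r then 0
    else if n + 1 = r then (if k = r then 1 else 0)
    else if k = 0 then 0
    else n * rStirling1 r n k + rStirling1 r n (k - 1)

/-- The (unsigned) Stirling numbers of the first kind. -/
def stirling1 : ℕ → ℕ → ℕ := rStirling1 0

/-!
The polynomial `∑ i, ⟦k+s,i+s⟧_s xⁱ` is the rising factorial `(x+s)(x+s+1)⋯(x+s+k-1)`, so up to the
factor `(-1)ᵏ/k!` it is the binomial coefficient `C(-(x+s), k)` in the binomial ring `ℚ[x]`. The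
identity is the coefficient of `xⁱ` in the Chu–Vandermonde convolution for
`-(x+s) = -(x+s+t) + t`, taken at `s = 0` and `t = r + 1`.
-/

section Recurrence

variable {s n k : ℕ}

lemma rStirling1_of_lt (h : k < s) : rStirling1 s n k = 0 := by
  cases n with
  | zero => rw [rStirling1, if_neg (by lia)]
  | succ n => rw [rStirling1, if_pos (Or.inr h)]

lemma rStirling1_self (s k : ℕ) : rStirling1 s s k = if k = s then 1 else 0 := by
  cases s with
  | zero => simp [rStirling1]
  | succ s =>
    rw [rStirling1]
    split_ifs <;> lia

lemma rStirling1_succ_zero (s n : ℕ) : rStirling1 s (n + 1) 0 = n * rStirling1 s n 0 := by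
  rcases s.eq_zero_or_pos with rfl | hs
  · cases n <;> simp [rStirling1]
  · rw [rStirling1_of_lt hs, rStirling1_of_lt hs, mul_zero]

lemma rStirling1_succ_succ (h : s ≤ n) :
    rStirling1 s (n + 1) (k + 1) = n * rStirling1 s n (k + 1) + rStirling1 s n k := by
  rcases lt_or_ge (k + 1) s with hk | hk
  · rw [rStirling1_of_lt hk, rStirling1_of_lt hk, rStirling1_of_lt (k.lt_succ_self.trans hk),
      mul_zero]
  · rw [rStirling1, if_neg (by lia), if_neg (by lia), if_neg k.succ_ne_zero, Nat.add_sub_cancel]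

end Recurrence

section RisingFactorial

open Polynomial

lemma coeff_X_pow_mul_ascPochhammer_comp (R : Type*) [Semiring R] (s k j : ℕ) :
    (X ^ s * (ascPochhammer R k).comp (X + (s : R[X]))).coeff j = (rStirling1 s (k + s) j : R) := by
  induction k generalizing j with
  | zero => simp [coeff_X_pow, rStirling1_self]
  | succ k ih =>
    have factor : X ^ s * (ascPochhammer R (k + 1)).comp (X + (s : R[X])) =
        X ^ s * (ascPochhammer R k).comp (X + (s : R[X])) * (X + ((k + s : ℕ) : R[X])) := by
      rw [ascPochhammer_succ_right, mul_X_add_natCast_comp, ← mul_assoc, add_assoc,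
        ← Nat.cast_add, Nat.add_comm s k]
    rw [factor, mul_add, coeff_add, coeff_mul_natCast, ih, Nat.add_right_comm]
    cases j with
    | zero =>
      rw [mul_coeff_zero, coeff_X_zero, mul_zero, zero_add, rStirling1_succ_zero, ← Nat.cast_comm,
        Nat.cast_mul]
    | succ j =>
      rw [coeff_mul_X, ih, rStirling1_succ_succ (Nat.le_add_left s k), ← Nat.cast_comm,
        ← Nat.cast_mul, ← Nat.cast_add, Nat.add_comm]

lemma coeff_ascPochhammer_comp (R : Type*) [Semiring R] (s k i : ℕ) :
    ((ascPochhammer R k).comp (X + (s : R[X]))).coeff i =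
      (rStirling1 s (k + s) (i + s) : R) := by
  rw [← coeff_X_pow_mul_ascPochhammer_comp, coeff_X_pow_mul]

lemma factorial_nsmul_choose_neg {R : Type*} [Ring R] [BinomialRing R] (x : R) (k : ℕ) :
    k.factorial • Ring.choose (-x) k = (-1) ^ k * (ascPochhammer R k).eval x := by
  rw [Ring.choose_neg', smul_comm, Ring.factorial_nsmul_multichoose_eq_ascPochhammer,
    ascPochhammer_smeval_eq_eval]
  simp [Units.smul_def]

lemma coeff_choose_neg_X_add (s k i : ℕ) :
    (Ring.choose (-(X + (s : ℚ[X]))) k).coeff i =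
      ((-1) ^ k / k.factorial * rStirling1 s (k + s) (i + s) : ℚ) := by
  have coeff_eq := congrArg (coeff · i) (factorial_nsmul_choose_neg (X + (s : ℚ[X])) k)
  have eval_eq_comp : (ascPochhammer ℚ[X] k).eval (X + (s : ℚ[X])) =
      (ascPochhammer ℚ k).comp (X + (s : ℚ[X])) := by
    rw [comp, ← ascPochhammer_eval₂]
  have neg_one_pow : (-1 : ℚ[X]) ^ k = C ((-1) ^ k) := by simp
  simp only [eval_eq_comp, neg_one_pow, coeff_C_mul, coeff_ascPochhammer_comp, nsmul_eq_mul,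
    coeff_natCast_mul] at coeff_eq
  rw [div_mul_eq_mul_div, eq_div_iff (by positivity), mul_comm, coeff_eq]

end RisingFactorial

open Polynomial in
theorem stmt11_general (m i s t : ℕ) :
    ∑ k ∈ Finset.range (m + 1),
        ((-1 : ℚ) ^ k / k.factorial) * t.choose (m - k) *
          rStirling1 (s + t) (k + (s + t)) (i + (s + t)) =
      ((-1 : ℚ) ^ m / m.factorial) * rStirling1 s (m + s) (i + s) := by
  have neg_eq_add : -(X + (s : ℚ[X])) = -(X + ((s + t : ℕ) : ℚ[X])) + (t : ℚ[X]) := by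
    push_cast
    ring
  rw [← coeff_choose_neg_X_add, neg_eq_add, Ring.add_choose_eq m (Commute.all _ _),
    Finset.Nat.sum_antidiagonal_eq_sum_range_succ_mk, finsetSum_coeff]
  refine Finset.sum_congr rfl fun k _ ↦ ?_
  rw [Ring.choose_natCast, coeff_mul_natCast, coeff_choose_neg_X_add, mul_right_comm]

theorem stmt11 (m i r : ℕ) (h : i ≤ m) :
    ∑ k ∈ Finset.range (m + 1),
        ((-1 : ℚ) ^ k / k.factorial) * (r + 1).choose (m - k) *
          rStirling1 (r + 1) (k + r + 1) (i + r + 1) =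
      ((-1 : ℚ) ^ m / m.factorial) * stirling1 m i := by
  simpa [stirling1, add_assoc] using stmt11_general m i 0 (r + 1)
end

section
/- For all integers q ≥ 1 and 1 ≤ r ≤ m, q^r · Σ_{k=1}^{m} (1/(k+q)!) · ⟦k, r⟧ = 1/q! − (1/(m+q)!) · Σ_{j=1}^{r} q^{j−1} · ⟦m+1, j⟧, as an identity of rational numbers. -/
/-!
Fix `r` and let `P n = ∑ j ∈ [1, r], x ^ (j - 1) * ⟦n, j⟧`, a truncation of the rising factorial
`x (x + 1) ⋯ (x + n - 1)` divided by `x`. Multiplying `P n` by `x + n` gives `P (n + 1)`, except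
that the truncation loses the term `x ^ r * ⟦n, r⟧`. If the weights satisfy
`w k = (x + (k + 1)) * w (k + 1)`, as `w k = 1 / (k + q)!` does for `x = q`, this makes
`x ^ r * (w k * ⟦k, r⟧) = w (k - 1) * P k - w k * P (k + 1)`, which telescopes to
`w 0 * P 1 - w m * P (m + 1)` with `P 1 = 1`.
-/

theorem stirling1_eq_stirlingFirst (n k : ℕ) : stirling1 n k = Nat.stirlingFirst n k := by
  induction n generalizing k with
  | zero => cases k <;> simp [stirling1, rStirling1]
  | succ n ih =>
    cases k with
    | zero => simp [stirling1, rStirling1]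
    | succ k =>
      rw [Nat.stirlingFirst_succ_succ, ← ih, ← ih]
      simp [stirling1, rStirling1]

section CommSemiring

variable {R : Type*} [CommSemiring R]

theorem sum_pow_mul_stirlingFirst_succ_add (x : R) (n r : ℕ) :
    ∑ j ∈ Finset.Icc 1 r, x ^ (j - 1) * (Nat.stirlingFirst (n + 1) j : R) +
        x ^ r * Nat.stirlingFirst n r =
      (x + n) * ∑ j ∈ Finset.Icc 1 r, x ^ (j - 1) * (Nat.stirlingFirst n j : R) +
        Nat.stirlingFirst n 0 := by
  induction r with
  | zero => simp
  | succ r ih =>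
    rw [Finset.sum_Icc_succ_top (by lia), Finset.sum_Icc_succ_top (by lia), mul_add,
      add_right_comm _ _ (Nat.stirlingFirst n 0 : R), ← ih, Nat.stirlingFirst_succ_succ,
      Nat.add_sub_cancel]
    push_cast
    ring

theorem sum_pow_mul_stirlingFirst_one (x : R) {r : ℕ} (hr : 1 ≤ r) :
    ∑ j ∈ Finset.Icc 1 r, x ^ (j - 1) * (Nat.stirlingFirst 1 j : R) = 1 := by
  rw [Finset.sum_eq_single_of_mem 1 (Finset.mem_Icc.2 ⟨le_rfl, hr⟩)]
  · simp [Nat.stirlingFirst_self]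
  · intro j hj hj1
    have hlt : 1 < j := lt_of_le_of_ne (Finset.mem_Icc.1 hj).1 hj1.symm
    simp [Nat.stirlingFirst_eq_zero_of_lt hlt]

theorem stmt13_general (x : R) (w : ℕ → R) {r : ℕ} (m : ℕ) (hr : 1 ≤ r)
    (hw : ∀ k < m, w k = (x + (k + 1)) * w (k + 1)) :
    x ^ r * ∑ k ∈ Finset.Icc 1 m, w k * Nat.stirlingFirst k r +
        w m * ∑ j ∈ Finset.Icc 1 r, x ^ (j - 1) * (Nat.stirlingFirst (m + 1) j : R) =
      w 0 := by
  induction m with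
  | zero => simp [sum_pow_mul_stirlingFirst_one x hr]
  | succ m ih =>
    set S := ∑ k ∈ Finset.Icc 1 m, w k * (Nat.stirlingFirst k r : R)
    set P : ℕ → R := fun n ↦ ∑ j ∈ Finset.Icc 1 r, x ^ (j - 1) * (Nat.stirlingFirst n j : R)
    have hP : P (m + 2) + x ^ r * Nat.stirlingFirst (m + 1) r = (x + (m + 1)) * P (m + 1) := by
      simpa using sum_pow_mul_stirlingFirst_succ_add x (m + 1) r
    calc x ^ r * ∑ k ∈ Finset.Icc 1 (m + 1), w k * Nat.stirlingFirst k r + w (m + 1) * P (m + 2)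
        = x ^ r * S + w (m + 1) * (P (m + 2) + x ^ r * Nat.stirlingFirst (m + 1) r) := by
          rw [Finset.sum_Icc_succ_top (by lia)]
          ring
      _ = x ^ r * S + (x + (m + 1)) * w (m + 1) * P (m + 1) := by rw [hP]; ring
      _ = x ^ r * S + w m * P (m + 1) := by rw [hw m m.lt_succ_self]
      _ = w 0 := ih fun k hk ↦ hw k (by lia)

end CommSemiring

theorem one_div_factorial_add_eq_mul_succ {K : Type*} [Field K] [CharZero K] (q k : ℕ) :
    (1 / (k + q).factorial : K) = (q + (k + 1)) * (1 / (k + 1 + q).factorial) := by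
  have hsucc : (q + (k + 1) : K) ≠ 0 := mod_cast (q + k).succ_ne_zero
  have hmul : ((k + 1 + q).factorial : K) = (q + (k + 1)) * (k + q).factorial := by
    rw [Nat.add_right_comm, Nat.factorial_succ]
    push_cast
    ring
  rw [hmul]
  field_simp

theorem stmt13 (q r m : ℕ) (hq : 1 ≤ q) (hr : 1 ≤ r) (hrm : r ≤ m) :
    (q : ℚ) ^ r * ∑ k ∈ Finset.Icc 1 m, (1 / (k + q).factorial : ℚ) * stirling1 k r =
      1 / q.factorial -
        (1 / (m + q).factorial : ℚ) *
          ∑ j ∈ Finset.Icc 1 r, (q : ℚ) ^ (j - 1) * stirling1 (m + 1) j := by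
  simpa only [stirling1_eq_stirlingFirst, Nat.zero_add] using
    eq_sub_of_add_eq (stmt13_general (q : ℚ) (fun k ↦ 1 / (k + q).factorial) m hr
      fun k _ ↦ one_div_factorial_add_eq_mul_succ q k)
end

section
/- For all integers m, i, r with 0 ≤ i ≤ m and r ≥ 0, Σ_{k=i}^{m} (−r−1)^{k−i} · C(k, i) · ⟦m+r+1, k+r+1⟧_{r+1} = ⟦m, i⟧, as an identity of integers, where C(a,b) is a binomial coefficient. -/
/-!
The polynomial `∑ k, ⟦m+s, k+s⟧_s X ^ k` is the rising factorial
`(X + s) (X + s + 1) ⋯ (X + s + m - 1)`, that is, the Taylor expansion of `X (X + 1) ⋯ (X + m - 1)`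
at `s`. Changing the parameter from `s` to `t` is therefore a further Taylor expansion at `t - s`,
whose coefficients are binomial sums in the old ones.
-/

theorem rStirling1_eq_zero_of_lt {s k : ℕ} (h : k < s) (n : ℕ) : rStirling1 s n k = 0 := by
  cases n with
  | zero => exact if_neg (by omega)
  | succ n => exact if_pos (Or.inr h)

theorem rStirling1_self_left (s k : ℕ) :
    rStirling1 s s (k + s) = if k = 0 then 1 else 0 := by
  cases s with
  | zero => simp [rStirling1]
  | succ s =>
    rw [rStirling1, if_neg (by omega), if_pos rfl]
    simp only [Nat.add_eq_right]

theorem rStirling1_succ_add_succ (s m k : ℕ) :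
    rStirling1 s (m + 1 + s) (k + 1 + s) =
      (m + s) * rStirling1 s (m + s) (k + 1 + s) + rStirling1 s (m + s) (k + s) := by
  rw [add_right_comm m, rStirling1, if_neg (by omega), if_neg (by omega), if_neg (by omega),
    show k + 1 + s - 1 = k + s by omega]

theorem rStirling1_succ_add_self (s m : ℕ) :
    rStirling1 s (m + 1 + s) s = (m + s) * rStirling1 s (m + s) s := by
  rw [add_right_comm m, rStirling1, if_neg (by omega), if_neg (by omega)]
  rcases Nat.eq_zero_or_pos s with rfl | hs
  · cases m <;> simp [rStirling1]
  · rw [if_neg hs.ne', rStirling1_eq_zero_of_lt (Nat.sub_lt hs one_pos), add_zero]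

section Taylor

open Polynomial

theorem coeff_taylor_eq_sum_Icc {R : Type*} [Semiring R] {f : R[X]} {m : ℕ}
    (hf : f.natDegree ≤ m) (x : R) (i : ℕ) :
    (taylor x f).coeff i =
      ∑ k ∈ Finset.Icc i m, (k.choose i : R) * f.coeff k * x ^ (k - i) := by
  have coeff_eq_sum_range : (taylor x f).coeff i =
      ∑ k ∈ Finset.range (m + 1), (k.choose i : R) * f.coeff k * x ^ (k - i) := by
    rw [taylor_coeff, hasseDeriv_apply, f.sum_over_range' (by simp) (m + 1) (by omega),
      eval_finsetSum]
    simp only [eval_monomial]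
  rw [coeff_eq_sum_range]
  refine (Finset.sum_subset (fun k hk => ?_) fun k hk hki => ?_).symm
  · rw [Finset.mem_range]
    exact Nat.lt_succ_of_le (Finset.mem_Icc.mp hk).2
  · have k_lt_i : k < i := by
      simp only [Finset.mem_range, Finset.mem_Icc] at hk hki
      omega
    rw [Nat.choose_eq_zero_of_lt k_lt_i, Nat.cast_zero, zero_mul, zero_mul]

theorem natDegree_ascPochhammer_le (R : Type*) [Semiring R] (m : ℕ) :
    (ascPochhammer R m).natDegree ≤ m := by
  rw [← ascPochhammer_map (Nat.castRingHom R)]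
  exact natDegree_map_le.trans_eq (ascPochhammer_natDegree ℕ m)

theorem taylor_ascPochhammer_succ {R : Type*} [CommSemiring R] (x : R) (m : ℕ) :
    taylor x (ascPochhammer R (m + 1)) = taylor x (ascPochhammer R m) * (X + C (m + x)) := by
  rw [ascPochhammer_succ_right, taylor_mul, map_add, taylor_X, ← C_eq_natCast, taylor_C, C_add,
    add_assoc, add_comm (C x)]

theorem coeff_taylor_ascPochhammer {R : Type*} [CommSemiring R] (s m k : ℕ) :
    (taylor (s : R) (ascPochhammer R m)).coeff k = rStirling1 s (m + s) (k + s) := by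
  induction m generalizing k with
  | zero => simp [rStirling1_self_left, coeff_one]
  | succ m ih =>
    rw [taylor_ascPochhammer_succ, mul_add, coeff_add, coeff_mul_C, ih]
    cases k with
    | zero =>
      rw [coeff_mul_X_zero, zero_add, zero_add, rStirling1_succ_add_self]
      push_cast
      ring
    | succ k =>
      rw [coeff_mul_X, ih, rStirling1_succ_add_succ]
      push_cast
      ring

theorem stmt16_general {R : Type*} [CommRing R] (m i s t : ℕ) :
    ∑ k ∈ Finset.Icc i m,
        ((t : R) - s) ^ (k - i) * k.choose i * rStirling1 s (m + s) (k + s) =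
      rStirling1 t (m + t) (i + t) := by
  have taylor_shift : taylor (t : R) (ascPochhammer R m) =
      taylor ((t : R) - s) (taylor (s : R) (ascPochhammer R m)) := by
    rw [taylor_taylor, sub_add_cancel]
  have degree_le : (taylor (s : R) (ascPochhammer R m)).natDegree ≤ m :=
    (natDegree_taylor _ _).trans_le (natDegree_ascPochhammer_le R m)
  rw [← coeff_taylor_ascPochhammer, taylor_shift, coeff_taylor_eq_sum_Icc degree_le]
  refine Finset.sum_congr rfl fun k _ => ?_
  rw [coeff_taylor_ascPochhammer]
  ring

end Taylor

theorem stmt16 (m i r : ℕ) (h : i ≤ m) :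
    ∑ k ∈ Finset.Icc i m,
        (-(r : ℤ) - 1) ^ (k - i) * k.choose i * rStirling1 (r + 1) (m + r + 1) (k + r + 1) =
      stirling1 m i := by
  simpa [stirling1, add_assoc, neg_add', -neg_add_rev] using
    stmt16_general (R := ℤ) m i (r + 1) 0
end
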